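/- arXiv:1510.03237 — 5 statements merged into one kernel-verified Lean document; each statement's English description precedes it below -/
import Mathlib

section
/- Let α and β be real numbers with (10−2√10)/5 < α < 1 and 1−α < β < f(α), where f(α) = min{3−3α, α/2, (3α²+4α−4)/(8(1−α))}. Then m := 2/α satisfies condition (C_m), i.e., 4/(3−α−β) < 2/α < min{4, 1/(1−α)}, (2(2−α)β − 3α + 2)·(2/α) < 4(2−α)β, and (4 + 8β − 4α − 3α²)·(2/α) < 16β. -/
/-- Condition `(C_m)` on the exponent `m`. -/
def CondM (α β m : ℝ) : Prop :=
  4 / (3 - α - β) < m ∧ m < min 4 (1 / (1 - α)) ∧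
    (2 * (2 - α) * β - 3 * α + 2) * m < 4 * (2 - α) * β ∧
    (4 + 8 * β - 4 * α - 3 * α ^ 2) * m < 16 * β

/-!
At `m = 2 / α` with `0 < α < 1`, the upper bounds on `m` amount to `2 / 3 < α`, and each of the
other three inequalities is an upper bound on `β`. Because
`3 * α ^ 2 + 4 * α - 4 = (3 * α - 2) * (α + 2)` and `(2 - α) * (2 + α) < 4`, the bound on `β` from
the last inequality of `(C_m)` is stronger than the one from the third.
-/

section TwoDiv

variable {α β : ℝ}

lemma four_div_lt_two_div_iff (hα : 0 < α) (hαβ : 0 < 3 - α - β) :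
    4 / (3 - α - β) < 2 / α ↔ β < 3 - 3 * α := by
  rw [div_lt_div_iff₀ hαβ hα]
  constructor <;> intro h <;> linarith

lemma two_div_lt_min_iff (hα : 0 < α) (hα1 : α < 1) :
    2 / α < min 4 (1 / (1 - α)) ↔ 2 / 3 < α := by
  rw [lt_min_iff, div_lt_iff₀ hα, div_lt_div_iff₀ hα (sub_pos.2 hα1)]
  constructor
  · rintro ⟨-, h⟩
    linarith
  · intro h
    constructor <;> linarith

lemma mul_two_div_lt_four_mul_iff (hα : 0 < α) (hα1 : α < 1) :
    (2 * (2 - α) * β - 3 * α + 2) * (2 / α) < 4 * (2 - α) * β ↔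
      β < (3 * α - 2) / (2 * (2 - α) * (1 - α)) := by
  have hden : 0 < 2 * (2 - α) * (1 - α) :=
    mul_pos (by linarith) (sub_pos.2 hα1)
  rw [← mul_div_assoc, div_lt_iff₀ hα, lt_div_iff₀ hden]
  constructor <;> intro h <;> linarith

lemma mul_two_div_lt_sixteen_mul_iff (hα : 0 < α) (hα1 : α < 1) :
    (4 + 8 * β - 4 * α - 3 * α ^ 2) * (2 / α) < 16 * β ↔
      β < (3 * α ^ 2 + 4 * α - 4) / (8 * (1 - α)) := by
  rw [← mul_div_assoc, div_lt_iff₀ hα, lt_div_iff₀ (by linarith)]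
  constructor <;> intro h <;> linarith

lemma quadratic_div_lt_linear_div (hα : 2 / 3 < α) (hα1 : α < 1) :
    (3 * α ^ 2 + 4 * α - 4) / (8 * (1 - α)) < (3 * α - 2) / (2 * (2 - α) * (1 - α)) := by
  have h1α : 0 < 1 - α := sub_pos.2 hα1
  have h2α : 0 < 2 - α := by linarith
  have h3α : 0 < 3 * α - 2 := by linarith
  have hsub : (3 * α - 2) / (2 * (2 - α) * (1 - α)) - (3 * α ^ 2 + 4 * α - 4) / (8 * (1 - α)) =
      α ^ 2 * (3 * α - 2) / (8 * (2 - α) * (1 - α)) := by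
    field_simp
    ring
  rw [← sub_pos, hsub]
  positivity

end TwoDiv

theorem two_div_alpha_satisfies_CondM_general (α β : ℝ) (hα : 2 / 3 < α) (hα1 : α < 1)
    (hβ : β < min (3 - 3 * α) ((3 * α ^ 2 + 4 * α - 4) / (8 * (1 - α)))) :
    CondM α β (2 / α) := by
  obtain ⟨hβ_lin, hβ_quad⟩ := lt_min_iff.1 hβ
  have hα0 : 0 < α := by linarith
  exact ⟨(four_div_lt_two_div_iff hα0 (by linarith)).2 hβ_lin,
    (two_div_lt_min_iff hα0 hα1).2 hα,
    (mul_two_div_lt_four_mul_iff hα0 hα1).2 (hβ_quad.trans (quadratic_div_lt_linear_div hα hα1)),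
    (mul_two_div_lt_sixteen_mul_iff hα0 hα1).2 hβ_quad⟩

/-- under the hypotheses of the main theorem, `m = 2/α` satisfies `(C_m)`. -/
theorem two_div_alpha_satisfies_CondM (α β : ℝ)
    (hα0 : (10 - 2 * Real.sqrt 10) / 5 < α) (hα1 : α < 1)
    (hβ0 : 1 - α < β)
    (hβ1 : β < min (3 - 3 * α) (min (α / 2) ((3 * α ^ 2 + 4 * α - 4) / (8 * (1 - α))))) :
    CondM α β (2 / α) := by
  obtain ⟨hβ_lin, hβ_half, hβ_quad⟩ := by simpa only [lt_min_iff] using hβ1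
  exact two_div_alpha_satisfies_CondM_general α β (by linarith) hα1 (lt_min hβ_lin hβ_quad)
end

section
/- Let α and β be real numbers with (10−2√10)/5 < α < 1 and 1−α < β < f(α), where f(α) = min{3−3α, α/2, (3α²+4α−4)/(8(1−α))}. Then there exists a real number m with m > 2/α satisfying condition (C_m). -/
/-!
Apart from the lower bound `4 / (3 - α - β) < m`, condition `(C_m)` is open in `m`. Hence it
suffices that `2 / α` and `4 / (3 - α - β)` both satisfy this open part: a point slightly to the
right of their maximum then satisfies everything.

The last inequality of `(C_m)` reads `8 β (m - 2) < (3 α - 2) (α + 2) m`, and multiplying it by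
`(2 - α) / 4` gives the one before it, because `4 - α ^ 2 < 4`. At `m = 2 / α` it is precisely the
third bound in the definition of `f`; at `m = 4 / (3 - α - β)` it becomes
`4 β (α + β - 1) < (3 α - 2) (α + 2)`, which follows from `1 - α < β < α / 2`.
-/

theorem exists_mem_lt_and_lt_of_isOpen {X : Type*} [LinearOrder X] [TopologicalSpace X]
    [OrderTopology X] [DenselyOrdered X] [NoMaxOrder X] {s : Set X} (hs : IsOpen s) {a b : X}
    (ha : a ∈ s) (hb : b ∈ s) : ∃ x ∈ s, a < x ∧ b < x := by
  have hmax : max a b ∈ s := max_rec' (· ∈ s) ha hb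
  obtain ⟨x, hx, hxs⟩ := (hs.eventually_mem hmax).exists_gt
  exact ⟨x, hxs, max_lt_iff.1 hx⟩

/-- The exponents satisfying every inequality of `(C_m)` other than the lower bound
`4 / (3 - α - β) < m`, to be tested at the two lower bounds required of `m`. -/
def condMUpper (α β : ℝ) : Set ℝ :=
  {m | m < min 4 (1 / (1 - α)) ∧
    (2 * (2 - α) * β - 3 * α + 2) * m < 4 * (2 - α) * β ∧
    (4 + 8 * β - 4 * α - 3 * α ^ 2) * m < 16 * β}

section

variable {α β m : ℝ}

theorem condM_iff_mem_condMUpper : CondM α β m ↔ 4 / (3 - α - β) < m ∧ m ∈ condMUpper α β :=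
  Iff.rfl

theorem isOpen_condMUpper (α β : ℝ) : IsOpen (condMUpper α β) :=
  (isOpen_lt continuous_id continuous_const).inter <|
    (isOpen_lt (continuous_const_mul _) continuous_const).inter
      (isOpen_lt (continuous_const_mul _) continuous_const)

theorem mem_condMUpper_of_mul_sub_two_lt (hα : 2 / 3 < α) (hα2 : α ≤ 2) (hm : 0 < m)
    (hm_lt : m < min 4 (1 / (1 - α))) (h : 8 * β * (m - 2) < (3 * α - 2) * (α + 2) * m) :
    m ∈ condMUpper α β := by
  refine ⟨hm_lt, ?_, by linarith⟩
  have hpos : 0 < (3 * α - 2) * m := mul_pos (by linarith) hm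
  have hsq : 0 < α ^ 2 := by positivity
  have : 8 * ((2 - α) * β * (m - 2)) < 4 * ((3 * α - 2) * m) :=
    calc 8 * ((2 - α) * β * (m - 2)) = (2 - α) * (8 * β * (m - 2)) := by ring
      _ ≤ (2 - α) * ((3 * α - 2) * (α + 2) * m) :=
        mul_le_mul_of_nonneg_left h.le (by linarith)
      _ = (4 - α ^ 2) * ((3 * α - 2) * m) := by ring
      _ < 4 * ((3 * α - 2) * m) := mul_lt_mul_of_pos_right (by linarith) hpos
  linarith

theorem two_div_mem_condMUpper (hα : 2 / 3 < α) (hα1 : α < 1)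
    (hβ : β < (3 * α ^ 2 + 4 * α - 4) / (8 * (1 - α))) : 2 / α ∈ condMUpper α β := by
  have hα0 : 0 < α := by linarith
  refine mem_condMUpper_of_mul_sub_two_lt hα (by linarith) (by positivity) (lt_min ?_ ?_) ?_
  · rw [div_lt_iff₀ hα0]
    linarith
  · rw [div_lt_div_iff₀ hα0 (by linarith)]
    linarith
  · rw [lt_div_iff₀ (by linarith)] at hβ
    calc 8 * β * (2 / α - 2) = β * (8 * (1 - α)) * (2 / α) := by field_simp
      _ < (3 * α ^ 2 + 4 * α - 4) * (2 / α) := by gcongr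
      _ = (3 * α - 2) * (α + 2) * (2 / α) := by ring

theorem four_mul_mul_add_sub_one_lt (hα1 : α < 1) (hβ0 : 1 - α < β) (hβ1 : β < α / 2) :
    4 * β * (α + β - 1) < (3 * α - 2) * (α + 2) := by
  have h : β * (α + β - 1) < α / 2 * (3 * α / 2 - 1) :=
    mul_lt_mul'' hβ1 (by linarith) (by linarith) (by linarith)
  linarith

theorem four_div_mem_condMUpper (hα1 : α < 1) (hβ0 : 1 - α < β) (hβ1 : β < α / 2) :
    4 / (3 - α - β) ∈ condMUpper α β := by
  have hs : 0 < 3 - α - β := by linarith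
  refine mem_condMUpper_of_mul_sub_two_lt (by linarith) (by linarith) (by positivity)
    (lt_min ?_ ?_) ?_
  · rw [div_lt_iff₀ hs]
    linarith
  · rw [div_lt_div_iff₀ hs (by linarith)]
    linarith
  · calc 8 * β * (4 / (3 - α - β) - 2) = 4 * β * (α + β - 1) * (4 / (3 - α - β)) := by
          field_simp
          ring
      _ < (3 * α - 2) * (α + 2) * (4 / (3 - α - β)) := by
          gcongr ?_ * _
          exact four_mul_mul_add_sub_one_lt hα1 hβ0 hβ1

theorem exists_m_gt_two_div_alpha_CondM_general (hα1 : α < 1) (hβ0 : 1 - α < β)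
    (hβ1 : β < min (α / 2) ((3 * α ^ 2 + 4 * α - 4) / (8 * (1 - α)))) :
    ∃ m : ℝ, 2 / α < m ∧ CondM α β m := by
  obtain ⟨hβ_half, hβ_div⟩ := lt_min_iff.1 hβ1
  have hα : 2 / 3 < α := by linarith
  obtain ⟨m, hm, hm_two, hm_four⟩ := exists_mem_lt_and_lt_of_isOpen (isOpen_condMUpper α β)
    (two_div_mem_condMUpper hα hα1 hβ_div) (four_div_mem_condMUpper hα1 hβ0 hβ_half)
  exact ⟨m, hm_two, condM_iff_mem_condMUpper.2 ⟨hm_four, hm⟩⟩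

end

/-- under the hypotheses of the main theorem there exists `m > 2/α`
satisfying condition `(C_m)`. -/
theorem exists_m_gt_two_div_alpha_CondM (α β : ℝ)
    (hα0 : (10 - 2 * Real.sqrt 10) / 5 < α) (hα1 : α < 1)
    (hβ0 : 1 - α < β)
    (hβ1 : β < min (3 - 3 * α) (min (α / 2) ((3 * α ^ 2 + 4 * α - 4) / (8 * (1 - α))))) :
    ∃ m : ℝ, 2 / α < m ∧ CondM α β m :=
  exists_m_gt_two_div_alpha_CondM_general hα1 hβ0 (lt_min_iff.1 hβ1).2
end

section
/- Let α, β, m be real numbers with 2/3 < α < 1, 1−α < β < α/2, and m satisfying condition (C_m). Then max{β, ((1+β−α)m − (2(2−α)−(1−α)m)β)/m, (2(1+β−α) + α(1−α) − (8/m − 2)β)/(2+α)} < min{1+β−α, α/2, 3−α−4/m}; in particular the interval of admissible η is nonempty. -/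
/-!
For `0 < β` and `0 < m`, clearing denominators turns each of the nine comparisons of a lower bound
with an upper bound into a polynomial inequality that is affine in `m`. Those with `α / 2` give
`β < α / 2` and the last two clauses of `(C_m)`. In those of the second and third lower bounds with
`3 - α - 4 / m` the factor `m - 2` splits off, so they amount to `2 < m`; `(C_m)` provides this
because `1 - α < β` makes `3 - α - β` smaller than `2`.
-/

/-- The second lower bound on `η`, after `β`. -/
noncomputable def etaLower₂ (α β m : ℝ) : ℝ :=
  ((1 + β - α) * m - (2 * (2 - α) - (1 - α) * m) * β) / m

/-- The third lower bound on `η`. -/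
noncomputable def etaLower₃ (α β m : ℝ) : ℝ :=
  (2 * (1 + β - α) + α * (1 - α) - (8 / m - 2) * β) / (2 + α)

/-- The right endpoint of the interval of admissible `η`. -/
noncomputable def etaUpper (α β m : ℝ) : ℝ :=
  min (min (1 + β - α) (α / 2)) (3 - α - 4 / m)

section Comparisons

variable {α β m x : ℝ}

lemma lt_etaUpper_iff (hm : 0 < m) :
    x < etaUpper α β m ↔
      x * m < (1 + β - α) * m ∧ x * m < α / 2 * m ∧ x * m < (3 - α) * m - 4 := by
  have clear_m : (3 - α - 4 / m) * m = (3 - α) * m - 4 := by field_simp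
  rw [etaUpper, lt_min_iff, lt_min_iff, and_assoc, ← clear_m]
  simp only [mul_lt_mul_iff_left₀ hm]

lemma beta_lt_etaUpper_iff (hm : 0 < m) :
    β < etaUpper α β m ↔ α < 1 ∧ β < α / 2 ∧ 4 < (3 - α - β) * m := by
  rw [lt_etaUpper_iff hm, mul_lt_mul_iff_left₀ hm, mul_lt_mul_iff_left₀ hm]
  refine and_congr ?_ (and_congr_right' ?_) <;> constructor <;> intro h <;> linarith

lemma etaLower₂_lt_etaUpper_iff (hβ : 0 < β) (hm : 0 < m) :
    etaLower₂ α β m < etaUpper α β m ↔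
      (1 - α) * m < 2 * (2 - α) ∧
        (2 * (2 - α) * β - 3 * α + 2) * m < 4 * (2 - α) * β ∧
        0 < (m - 2) * (2 - (2 - α) * β) := by
  rw [lt_etaUpper_iff hm, etaLower₂, div_mul_cancel₀ _ hm.ne', sub_lt_self_iff,
    mul_pos_iff_of_pos_right hβ, sub_pos]
  refine and_congr_right' (and_congr ?_ ?_) <;> constructor <;> intro h <;> linarith

lemma etaLower₃_lt_etaUpper_iff (hα : 0 < 2 + α) (hβ : 0 < β) (hm : 0 < m) :
    etaLower₃ α β m < etaUpper α β m ↔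
      (2 - α) * m < 8 ∧
        (4 + 8 * β - 4 * α - 3 * α ^ 2) * m < 16 * β ∧
        0 < (m - 2) * (2 + α - 2 * β) := by
  have clear_m : etaLower₃ α β m * m =
      ((2 * (1 + β - α) + α * (1 - α) + 2 * β) * m - 8 * β) / (2 + α) := by
    rw [etaLower₃]
    field_simp
    ring
  rw [lt_etaUpper_iff hm, clear_m, div_lt_iff₀ hα, div_lt_iff₀ hα, div_lt_iff₀ hα,
    ← mul_lt_mul_iff_left₀ (b := (2 - α) * m) hβ]
  refine and_congr ?_ (and_congr ?_ ?_) <;> constructor <;> intro h <;> linarith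

lemma one_sub_mul_lt_of_two_sub_mul_lt (hα : α < 1) (h : (2 - α) * m < 8) :
    (1 - α) * m < 2 * (2 - α) := by
  refine lt_of_mul_lt_mul_left ?_ (by linarith : 0 ≤ 2 - α)
  calc (2 - α) * ((1 - α) * m) = (1 - α) * ((2 - α) * m) := by ring
    _ < (1 - α) * 8 := mul_lt_mul_of_pos_left h (by linarith)
    _ ≤ (2 - α) * (2 * (2 - α)) := by linarith [sq_nonneg α]

theorem admissible_eta_interval_nonempty_general (hβ : 0 < β) (hm : 0 < m) :
    max (max β (etaLower₂ α β m)) (etaLower₃ α β m) < etaUpper α β m ↔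
      α < 1 ∧ β < α / 2 ∧ 2 < m ∧ 4 < (3 - α - β) * m ∧ (2 - α) * m < 8 ∧
        (2 * (2 - α) * β - 3 * α + 2) * m < 4 * (2 - α) * β ∧
        (4 + 8 * β - 4 * α - 3 * α ^ 2) * m < 16 * β := by
  rw [max_lt_iff, max_lt_iff, beta_lt_etaUpper_iff hm, etaLower₂_lt_etaUpper_iff hβ hm]
  constructor
  · rintro ⟨⟨⟨hα, hβα, h_four⟩, -, h_half₂, -⟩, h_lower₃⟩
    obtain ⟨h_eight, h_half₃, h_factor⟩ :=
      (etaLower₃_lt_etaUpper_iff (by linarith) hβ hm).1 h_lower₃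
    have h_two : 0 < m - 2 := pos_of_mul_pos_left h_factor (by linarith)
    exact ⟨hα, hβα, sub_pos.1 h_two, h_four, h_eight, h_half₂, h_half₃⟩
  · rintro ⟨hα, hβα, h_two, h_four, h_eight, h_half₂, h_half₃⟩
    have h_two' : 0 < m - 2 := sub_pos.2 h_two
    have h_small : (2 - α) * β < 2 :=
      calc (2 - α) * β < (2 - α) * (α / 2) := mul_lt_mul_of_pos_left hβα (by linarith)
        _ < 2 := by linarith [sq_nonneg (1 - α)]
    refine ⟨⟨⟨hα, hβα, h_four⟩, one_sub_mul_lt_of_two_sub_mul_lt hα h_eight, h_half₂,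
      mul_pos h_two' (by linarith)⟩, ?_⟩
    exact (etaLower₃_lt_etaUpper_iff (by linarith) hβ hm).2
      ⟨h_eight, h_half₃, mul_pos h_two' (by linarith)⟩

end Comparisons

namespace CondM

variable {α β m : ℝ}

lemma four_lt_mul (h : CondM α β m) (hαβ : α + β < 3) : 4 < (3 - α - β) * m :=
  (div_lt_iff₀' (by linarith)).1 h.1

lemma two_lt (h : CondM α β m) (hαβ : 1 < α + β) (hαβ' : α + β < 3) : 2 < m :=
  calc (2 : ℝ) < 4 / (3 - α - β) := by rw [lt_div_iff₀ (by linarith)]; linarith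
    _ < m := h.1

lemma two_sub_mul_lt_eight (h : CondM α β m) (hα : 0 ≤ α) (hm : 0 ≤ m) : (2 - α) * m < 8 :=
  calc (2 - α) * m ≤ 2 * m := mul_le_mul_of_nonneg_right (by linarith) hm
    _ < 8 := by linarith [(lt_min_iff.1 h.2.1).1]

end CondM

/-- the interval of admissible `η` is nonempty. -/
theorem admissible_eta_interval_nonempty (α β m : ℝ)
    (hα0 : 2 / 3 < α) (hα1 : α < 1) (hβ0 : 1 - α < β) (hβ1 : β < α / 2)
    (hm : CondM α β m) :
    max (max β
        (((1 + β - α) * m - (2 * (2 - α) - (1 - α) * m) * β) / m))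
        ((2 * (1 + β - α) + α * (1 - α) - (8 / m - 2) * β) / (2 + α))
      < min (min (1 + β - α) (α / 2)) (3 - α - 4 / m) := by
  have two_lt_m : 2 < m := hm.two_lt (by linarith) (by linarith)
  exact (admissible_eta_interval_nonempty_general (by linarith) (by linarith)).2
    ⟨hα1, hβ1, two_lt_m, hm.four_lt_mul (by linarith),
      hm.two_sub_mul_lt_eight (by linarith) (by linarith), hm.2.2⟩
end

section
/- Let α, β, m be real numbers with 2/3 < α < 1, 1−α < β < α/2, and m satisfying condition (C_m). Let η be a real number with max{β, ((1+β−α)m − (2(2−α)−(1−α)m)β)/m, (2(1+β−α) + α(1−α) − (8/m − 2)β)/(2+α)} < η < min{1+β−α, α/2, 3−α−4/m}, and let s be a real number with max{(1+β−α−η)m/(m−(2−α)(m−2)), 2(1+β−α−η)β/(α(α+η−1) + (8/m − 2)β)} < s < β. Then max{2m/(3m−4), 2s/(2s+α+η−β−1)} < min{2, 2m/((2−α)(m−2)+m), 2/(α+η−β+s), (4(1−s)β + 2αs)/((6−α−8/m)(1−s)β + αs(1+α+η−β))}; in particular the interval of admissible p is nonempty. -/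
/-!
Put `τ = 4 / m - 1` and `δ = 1 + β - α - η`. In the coordinate `t = 2 - 2 / p`, which increases with
`p`, the two lower bounds for `p` become `τ` and `δ / s`, and the four upper bounds become `1`,
`τ + α / 2 * (1 - τ)`, `1 + δ - s`, and the mean of `τ + α / 2` and `δ` with weights
`2 * (1 - s) * β` and `α * s`. The two lower bounds on `s` say exactly that
`δ / s < τ + α / 2 * (1 - τ)` and `2 * β * (δ / s) < α * (β - δ) + 2 * τ * β`, the latter being
equivalent to `δ / s` lying below the mean. The inequality `δ / s < 1 + δ - s` is
`0 < (1 - s) * (1 - δ / s)`.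
-/

section WeightedMean

variable {K : Type*} [Field K]

/-- The mean of `x` and `y` with weights `a` and `b`, not required to add up to `1`. It is the
coordinate of the last upper bound for `p`. -/
def weightedMean (a b x y : K) : K :=
  (a * x + b * y) / (a + b)

variable [LinearOrder K] [IsStrictOrderedRing K] {a b x y t : K}

lemma lt_weightedMean_iff (hab : 0 < a + b) :
    t < weightedMean a b x y ↔ 0 < a * (x - t) + b * (y - t) := by
  rw [weightedMean, lt_div_iff₀ hab, ← sub_pos]
  ring_nf

lemma weightedMean_lt (ha : 0 < a) (hb : 0 < b) (hx : x < t) (hy : y < t) :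
    weightedMean a b x y < t := by
  rw [weightedMean, div_lt_iff₀ (add_pos ha hb)]
  linarith [mul_lt_mul_of_pos_left hx ha, mul_lt_mul_of_pos_left hy hb]

end WeightedMean

/-- The exponent `p` with `2 - 2 / p = t`, that is, the Hölder conjugate of `2 / t`. It is used for
`t < 2` only; at `t = 2` it has the junk value `0`. -/
noncomputable def dualExponent (t : ℝ) : ℝ :=
  2 / (2 - t)

section DualExponent

variable {α β m η s : ℝ}

lemma dualExponent_strictMonoOn : StrictMonoOn dualExponent (Set.Iio 2) :=
  fun _ _ _ hb hab ↦ div_lt_div_of_pos_left two_pos (sub_pos.2 hb) (sub_lt_sub_left hab 2)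

lemma max_dualExponent_lt {a b c : ℝ} (hac : a < c) (hbc : b < c) (hc : c < 2) :
    max (dualExponent a) (dualExponent b) < dualExponent c :=
  max_lt (dualExponent_strictMonoOn (hac.trans hc) hc hac)
    (dualExponent_strictMonoOn (hbc.trans hc) hc hbc)

lemma dualExponent_one : dualExponent 1 = 2 := by
  norm_num [dualExponent]

lemma dualExponent_four_div_sub_one (hm : m ≠ 0) :
    dualExponent (4 / m - 1) = 2 * m / (3 * m - 4) := by
  rw [dualExponent, ← mul_div_mul_right _ _ hm]
  congr 1
  field_simp
  ring

lemma dualExponent_div (hs : s ≠ 0) :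
    dualExponent ((1 + β - α - η) / s) = 2 * s / (2 * s + α + η - β - 1) := by
  rw [dualExponent, ← mul_div_mul_right _ _ hs]
  congr 1
  field_simp
  ring

lemma dualExponent_add_mul_one_sub (hm : m ≠ 0) :
    dualExponent (4 / m - 1 + α / 2 * (1 - (4 / m - 1))) =
      2 * m / ((2 - α) * (m - 2) + m) := by
  rw [dualExponent, ← mul_div_mul_right _ _ hm]
  congr 1
  field_simp
  ring

lemma dualExponent_one_add_sub :
    dualExponent (1 + (1 + β - α - η) - s) = 2 / (α + η - β + s) := by
  rw [dualExponent]
  ring_nf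

lemma dualExponent_weightedMean (hw : 2 * (1 - s) * β + α * s ≠ 0) :
    dualExponent
        (weightedMean (2 * (1 - s) * β) (α * s) (4 / m - 1 + α / 2) (1 + β - α - η)) =
      (4 * (1 - s) * β + 2 * α * s) /
        ((6 - α - 8 / m) * (1 - s) * β + α * s * (1 + α + η - β)) := by
  rw [dualExponent, weightedMean, ← mul_div_mul_right _ _ hw, sub_mul, div_mul_cancel₀ _ hw]
  ring_nf

end DualExponent

section Coordinates

variable {α β m s τ δ : ℝ}

lemma lt_add_mul_one_sub (hα : 0 < α) (hτ : τ < 1) : τ < τ + α / 2 * (1 - τ) :=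
  lt_add_of_pos_right τ (mul_pos (half_pos hα) (sub_pos.2 hτ))

lemma add_mul_one_sub_le_one (hα : α ≤ 2) (hτ : τ ≤ 1) : τ + α / 2 * (1 - τ) ≤ 1 := by
  have : α / 2 * (1 - τ) ≤ 1 - τ := mul_le_of_le_one_left (sub_nonneg.2 hτ) (by linarith)
  linarith

lemma div_lt_one_add_sub (hs0 : 0 < s) (hs1 : s < 1) (hδs : δ / s < 1) :
    δ / s < 1 + δ - s := by
  have hδ : δ / s * s = δ := div_mul_cancel₀ δ hs0.ne'
  linarith [mul_pos (sub_pos.2 hs1) (sub_pos.2 hδs)]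

lemma weights_add_pos (hα : 0 < α) (hβ : 0 < β) (hs0 : 0 < s) (hs1 : s < 1) :
    0 < 2 * (1 - s) * β + α * s :=
  add_pos (mul_pos (mul_pos two_pos (sub_pos.2 hs1)) hβ) (mul_pos hα hs0)

lemma lt_weightedMean_of_lt (hα : 0 < α) (hs0 : 0 < s) (hs1 : s < 1) (hsβ : s < β)
    (hτ : τ < 1 + δ - β) :
    τ < weightedMean (2 * (1 - s) * β) (α * s) (τ + α / 2) δ := by
  rw [lt_weightedMean_iff (weights_add_pos hα (hs0.trans hsβ) hs0 hs1)]
  calc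
    0 < α * ((β - s) + s * (1 + δ - β - τ)) :=
      mul_pos hα (add_pos (sub_pos.2 hsβ) (mul_pos hs0 (sub_pos.2 hτ)))
    _ = 2 * (1 - s) * β * (τ + α / 2 - τ) + α * s * (δ - τ) := by ring

lemma div_lt_weightedMean (hα : 0 < α) (hβ : 0 < β) (hs0 : 0 < s) (hs1 : s < 1)
    (hδ : 2 * δ * β / s < α * (β - δ) + 2 * τ * β) :
    δ / s < weightedMean (2 * (1 - s) * β) (α * s) (τ + α / 2) δ := by
  rw [lt_weightedMean_iff (weights_add_pos hα hβ hs0 hs1)]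
  calc
    0 < (1 - s) * (α * (β - δ) + 2 * τ * β - 2 * δ * β / s) :=
      mul_pos (sub_pos.2 hs1) (sub_pos.2 hδ)
    _ = 2 * (1 - s) * β * (τ + α / 2 - δ / s) + α * s * (δ - δ / s) := by
      field_simp
      ring

lemma max_dualExponent_lt_min (hα0 : 0 < α) (hα2 : α ≤ 2) (hβ1 : β ≤ 1) (hτ0 : 0 ≤ τ)
    (hτ1 : τ < 1) (hδβ : δ < β) (hτδ : τ < 1 + δ - β) (hs : 0 < s) (hsβ : s < β)
    (hs_left : δ / (τ + α / 2 * (1 - τ)) < s)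
    (hs_right : 2 * δ * β / (α * (β - δ) + 2 * τ * β) < s) :
    max (dualExponent τ) (dualExponent (δ / s))
      < min (min 2 (dualExponent (τ + α / 2 * (1 - τ))))
          (min (dualExponent (1 + δ - s))
            (dualExponent (weightedMean (2 * (1 - s) * β) (α * s) (τ + α / 2) δ))) := by
  have hβ : 0 < β := hs.trans hsβ
  have hs1 : s < 1 := hsβ.trans_le hβ1
  have hτσ : τ < τ + α / 2 * (1 - τ) := lt_add_mul_one_sub hα0 hτ1
  have hσ1 : τ + α / 2 * (1 - τ) ≤ 1 := add_mul_one_sub_le_one hα2 hτ1.le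
  have hδσ : δ / s < τ + α / 2 * (1 - τ) := (div_lt_comm₀ (hτ0.trans_lt hτσ) hs).1 hs_left
  have hδs : δ / s < 1 := hδσ.trans_le hσ1
  have hδ_mean : 2 * δ * β / s < α * (β - δ) + 2 * τ * β :=
    (div_lt_comm₀ (add_pos_of_pos_of_nonneg (mul_pos hα0 (sub_pos.2 hδβ)) (by positivity)) hs).1
      hs_right
  refine lt_min (lt_min ?_ ?_) (lt_min ?_ ?_)
  · exact (max_dualExponent_lt hτ1 hδs one_lt_two).trans_eq dualExponent_one
  · exact max_dualExponent_lt hτσ hδσ (hσ1.trans_lt one_lt_two)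
  · have : δ < s := (div_lt_one hs).1 hδs
    exact max_dualExponent_lt (by linarith) (div_lt_one_add_sub hs hs1 hδs) (by linarith)
  · exact max_dualExponent_lt (lt_weightedMean_of_lt hα0 hs hs1 hsβ hτδ)
      (div_lt_weightedMean hα0 hβ hs hs1 hδ_mean)
      (weightedMean_lt (mul_pos (mul_pos two_pos (sub_pos.2 hs1)) hβ) (mul_pos hα0 hs)
        (by linarith) (by linarith))

lemma sub_mul_sub_two_eq_mul (hm : m ≠ 0) :
    m - (2 - α) * (m - 2) = (4 / m - 1 + α / 2 * (1 - (4 / m - 1))) * m := by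
  field_simp
  ring

end Coordinates

namespace CondM

variable {α β m : ℝ}

lemma two_lt_s18 (hm : CondM α β m) (h1 : 1 < α + β) (h3 : α + β < 3) : 2 < m := by
  have : 2 < 4 / (3 - α - β) := by
    rw [lt_div_iff₀ (by linarith)]
    linarith
  exact this.trans hm.1

lemma lt_four (hm : CondM α β m) : m < 4 :=
  hm.2.1.trans_le (min_le_left _ _)

end CondM

theorem admissible_p_interval_nonempty_general {α β m η s : ℝ}
    (hα0 : 0 < α) (hα2 : α ≤ 2) (hβ1 : β ≤ 1) (hm2 : 2 < m) (hm4 : m ≤ 4)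
    (hη0 : 1 - α < η) (hη1 : η < min (1 + β - α) (3 - α - 4 / m))
    (hs0 : max ((1 + β - α - η) * m / (m - (2 - α) * (m - 2)))
        (2 * (1 + β - α - η) * β / (α * (α + η - 1) + (8 / m - 2) * β)) < s)
    (hsβ : s < β) :
    max (2 * m / (3 * m - 4)) (2 * s / (2 * s + α + η - β - 1))
      < min (min 2 (2 * m / ((2 - α) * (m - 2) + m)))
          (min (2 / (α + η - β + s))
            ((4 * (1 - s) * β + 2 * α * s) /
              ((6 - α - 8 / m) * (1 - s) * β + α * s * (1 + α + η - β)))) := by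
  obtain ⟨hs_left, hs_right⟩ := max_lt_iff.1 hs0
  obtain ⟨hηδ, hητ⟩ := lt_min_iff.1 hη1
  have hm : 0 < m := two_pos.trans hm2
  have hτ0 : 0 ≤ 4 / m - 1 := sub_nonneg.2 ((one_le_div hm).2 hm4)
  have hτ1 : 4 / m - 1 < 1 := by
    rw [sub_lt_iff_lt_add, div_lt_iff₀ hm]
    linarith
  rw [sub_mul_sub_two_eq_mul hm.ne', mul_div_mul_right _ _ hm.ne'] at hs_left
  rw [show α + η - 1 = β - (1 + β - α - η) by ring,
    show 8 / m - 2 = 2 * (4 / m - 1) by ring] at hs_right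
  have hs : 0 < s :=
    (div_pos (by linarith) (hτ0.trans_lt (lt_add_mul_one_sub hα0 hτ1))).trans hs_left
  have hw : 0 < 2 * (1 - s) * β + α * s :=
    weights_add_pos hα0 (hs.trans hsβ) hs (hsβ.trans_le hβ1)
  rw [← dualExponent_four_div_sub_one hm.ne', ← dualExponent_div hs.ne', ← dualExponent_one_add_sub,
    ← dualExponent_add_mul_one_sub hm.ne', ← dualExponent_weightedMean hw.ne']
  exact max_dualExponent_lt_min hα0 hα2 hβ1 hτ0 hτ1 (by linarith) (by linarith) hs hsβ
    hs_left hs_right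

/-- the interval of admissible `p` is nonempty. -/
theorem admissible_p_interval_nonempty (α β m η s : ℝ)
    (hα0 : 2 / 3 < α) (hα1 : α < 1) (hβ0 : 1 - α < β) (hβ1 : β < α / 2)
    (hm : CondM α β m)
    (hη0 : max (max β
        (((1 + β - α) * m - (2 * (2 - α) - (1 - α) * m) * β) / m))
        ((2 * (1 + β - α) + α * (1 - α) - (8 / m - 2) * β) / (2 + α)) < η)
    (hη1 : η < min (min (1 + β - α) (α / 2)) (3 - α - 4 / m))
    (hs0 : max ((1 + β - α - η) * m / (m - (2 - α) * (m - 2)))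
        (2 * (1 + β - α - η) * β / (α * (α + η - 1) + (8 / m - 2) * β)) < s)
    (hs1 : s < β) :
    max (2 * m / (3 * m - 4)) (2 * s / (2 * s + α + η - β - 1))
      < min (min 2 (2 * m / ((2 - α) * (m - 2) + m)))
          (min (2 / (α + η - β + s))
            ((4 * (1 - s) * β + 2 * α * s) /
              ((6 - α - 8 / m) * (1 - s) * β + α * s * (1 + α + η - β)))) := by
  simp only [max_lt_iff, lt_min_iff] at hη0 hη1
  exact admissible_p_interval_nonempty_general (by linarith) (by linarith) (by linarith)
    (hm.two_lt_s18 (by linarith) (by linarith)) hm.lt_four.le (hβ0.trans hη0.1.1)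
    (lt_min hη1.1.1 hη1.2) hs0 hs1
end

section
/- Let α, β, m be real numbers with 2/3 < α < 1, 1−α < β < α/2, and m satisfying condition (C_m). Then there exist real numbers η, s, p such that: β < η < min{1+β−α, α/2}; 1+β−α−η < s < β; 1 < p < 2; 2m/(3m−4) < p; 2s/(2s+α+η−β−1) < p; p < 2m/((2−α)(m−2)+m); p < 2/(α+η−β+s); and p < (4(1−s)β + 2αs)/((6−α−8/m)(1−s)β + αs(1+α+η−β)). -/
/-!
Put `y = 1 - 2 / m` and `δ = 1 + β - α - η`. Every bound on `p` in the theorem is then a quotient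
with positive denominator, and comparing each lower bound with each upper bound eliminates `p`.
The comparisons that are not automatic say that `s - δ < 2y` and that `s` exceeds two thresholds
depending on `δ`. So `s` exists as soon as the thresholds lie below `min β (δ + 2y)`: below
`δ + 2y` they do whenever `δ + 2y ≤ β`, and below `β` they do once `δ` is close enough to its
infimum `max 0 (1 + β - 3α/2)`. The latter is what `4y < 2 + α` expresses when the infimum is `0`,
and what the last two inequalities of `(C_m)` express when it is `1 + β - 3α/2`.
-/

/-- The conditions on `η`, `s` and `p` after elimination of `p`, written in terms of
`y = 1 - 2 / m` and the gap `δ = 1 + β - α - η`. The last two fields come from comparing the lower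
bound `2 * s / (2 * s - δ)` on `p` with `2 / ((2 - α) * y + 1)` and with `lastBound`. -/
structure IsAdmissiblePair (α β y δ s : ℝ) : Prop where
  gap_pos : 0 < δ
  lt_gap : 1 + β - 3 * α / 2 < δ
  gap_lt : δ < 1 - α
  gap_lt_s : δ < s
  lt_beta : s < β
  sub_gap_lt : s - δ < 2 * y
  gap_lt_mul : δ < s * (1 - (2 - α) * y)
  gap_mul_lt : δ * (2 * β + α * s) < s * β * (2 + α - 4 * y)

section Existence

variable {α β y δ : ℝ}

lemma two_sub_mul_lt_one (hα : α < 2) (hy : 4 * y < 2 + α) : (2 - α) * y < 1 := by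
  linarith [mul_lt_mul_of_pos_left hy (sub_pos.2 hα), sq_nonneg α]

lemma exists_gap (hα : α < 1) (hβ : 0 < β) (hβα : β < α / 2) (hy : 4 * y < 2 + α)
    (h₁ : 2 * (2 - α) * β * y < 3 * α - 2) (h₂ : 8 * β * y < (3 * α - 2) * (2 + α)) :
    ∃ δ, 0 < δ ∧ 1 + β - 3 * α / 2 < δ ∧ δ < 1 - α ∧
      δ < β * (1 - (2 - α) * y) ∧ δ * (2 + α) < β * (2 + α - 4 * y) := by
  have hα₂ : 0 < 2 + α := by linarith
  have hc₁ : 0 < β * (1 - (2 - α) * y) :=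
    mul_pos hβ (sub_pos.2 (two_sub_mul_lt_one (by linarith) hy))
  have hc₂ : 0 < β * (2 + α - 4 * y) / (2 + α) :=
    div_pos (mul_pos hβ (sub_pos.2 hy)) hα₂
  obtain ⟨δ, hlow, hup⟩ : ∃ δ, max 0 (1 + β - 3 * α / 2) < δ ∧
      δ < min (1 - α) (min (β * (1 - (2 - α) * y)) (β * (2 + α - 4 * y) / (2 + α))) := by
    refine exists_between (max_lt (lt_min (by linarith) (lt_min hc₁ hc₂))
      (lt_min (by linarith) (lt_min (by linarith) ?_)))
    rw [lt_div_iff₀ hα₂]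
    linarith
  simp only [max_lt_iff, lt_min_iff, lt_div_iff₀ hα₂] at hlow hup
  exact ⟨δ, hlow.1, hlow.2, hup⟩

lemma gap_lt_min_mul (hα : 0 < α) (hβ : β < 1) (hy : 0 < y) (hδ : 0 < δ)
    (h : δ < β * (1 - (2 - α) * y)) :
    δ < min β (δ + 2 * y) * (1 - (2 - α) * y) := by
  rcases le_total β (δ + 2 * y) with hle | hle
  · rwa [min_eq_left hle]
  · rw [min_eq_right hle]
    have : (2 - α) * (δ + 2 * y) < 2 := by
      linarith [mul_pos hα (show 0 < δ + 2 * y by positivity)]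
    have : 0 < y * (2 - (2 - α) * (δ + 2 * y)) := mul_pos hy (sub_pos.2 this)
    linarith

lemma gap_mul_lt_min_mul (hα : 0 < α) (hβ₀ : 0 < β) (hβ₁ : β < 1) (hy : 0 < y) (hδ : 0 < δ)
    (h : δ * (2 + α) < β * (2 + α - 4 * y)) :
    δ * (2 * β + α * min β (δ + 2 * y)) < min β (δ + 2 * y) * β * (2 + α - 4 * y) := by
  rcases le_total β (δ + 2 * y) with hle | hle
  · rw [min_eq_left hle]
    linarith [mul_lt_mul_of_pos_right h hβ₀]
  · rw [min_eq_right hle]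
    have h₁ : 0 < β * y * (1 - (δ + 2 * y)) := mul_pos (mul_pos hβ₀ hy) (by linarith)
    have h₂ : 0 ≤ α * (δ + 2 * y) * (β - (δ + 2 * y)) :=
      mul_nonneg (by positivity) (sub_nonneg.2 hle)
    have h₃ : 0 < α * (δ + 2 * y) * y := by positivity
    linarith

lemma exists_isAdmissiblePair (hα : α < 1) (hβ : 0 < β) (hβα : β < α / 2)
    (hy₀ : 0 < y) (hy : 4 * y < 2 + α)
    (h₁ : 2 * (2 - α) * β * y < 3 * α - 2) (h₂ : 8 * β * y < (3 * α - 2) * (2 + α)) :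
    ∃ δ s, IsAdmissiblePair α β y δ s := by
  have hα₀ : 0 < α := by linarith
  obtain ⟨δ, hδ, hlow, hup, hP, hQ⟩ := exists_gap hα hβ hβα hy h₁ h₂
  have hP' := gap_lt_min_mul hα₀ (by linarith) hy₀ hδ hP
  have hQ' := gap_mul_lt_min_mul hα₀ hβ (by linarith) hy₀ hδ hQ
  have hp : 0 < 1 - (2 - α) * y := sub_pos.2 (two_sub_mul_lt_one (by linarith) hy)
  have hq : 0 < β * (2 + α - 4 * y) - α * δ := by linarith
  obtain ⟨s, hs, hst⟩ : ∃ s, max (δ / (1 - (2 - α) * y))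
      (2 * β * δ / (β * (2 + α - 4 * y) - α * δ)) < s ∧ s < min β (δ + 2 * y) := by
    refine exists_between (max_lt ?_ ?_)
    · rwa [div_lt_iff₀ hp]
    · rw [div_lt_iff₀ hq]
      linarith
  simp only [max_lt_iff, lt_min_iff, div_lt_iff₀ hp, div_lt_iff₀ hq] at hs hst
  have hs₀ : 0 < s := pos_of_mul_pos_left (hδ.trans hs.1) hp.le
  have hδs : 0 < s * ((2 - α) * y) := mul_pos hs₀ (mul_pos (by linarith) hy₀)
  exact ⟨δ, s, hδ, hlow, hup, by linarith, hst.1, by linarith, hs.1, by linarith⟩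

end Existence

/-- The last upper bound on `p` in the theorem, written in terms of `y = 1 - 2 / m` and the gap
`δ = 1 + β - α - η`. -/
noncomputable def lastBound (α β y δ s : ℝ) : ℝ :=
  (4 * (1 - s) * β + 2 * α * s) / ((2 - α + 4 * y) * (1 - s) * β + α * s * (2 - δ))

namespace IsAdmissiblePair

variable {α β y δ s : ℝ}

lemma alpha_lt_one (h : IsAdmissiblePair α β y δ s) : α < 1 := by
  linarith [h.gap_pos, h.gap_lt]

lemma s_pos (h : IsAdmissiblePair α β y δ s) : 0 < s :=
  h.gap_pos.trans h.gap_lt_s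

lemma beta_pos (h : IsAdmissiblePair α β y δ s) : 0 < β :=
  h.s_pos.trans h.lt_beta

lemma alpha_pos (h : IsAdmissiblePair α β y δ s) : 0 < α := by
  linarith [h.lt_gap, h.gap_lt, h.beta_pos]

lemma s_lt_one (h : IsAdmissiblePair α β y δ s) : s < 1 := by
  linarith [h.lt_beta, h.lt_gap, h.gap_lt, h.alpha_lt_one]

lemma one_lt_two_mul_div (h : IsAdmissiblePair α β y δ s) : 1 < 2 * s / (2 * s - δ) := by
  rw [one_lt_div (by linarith [h.gap_lt_s, h.s_pos])]
  linarith [h.gap_pos]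

lemma lastBound_den_pos (h : IsAdmissiblePair α β y δ s) (hy : 0 < y) :
    0 < (2 - α + 4 * y) * (1 - s) * β + α * s * (2 - δ) := by
  have h₁ : 0 < 2 - α + 4 * y := by linarith [h.alpha_lt_one]
  have h₂ : 0 < 2 - δ := by linarith [h.gap_lt_s, h.s_lt_one]
  exact add_pos (mul_pos (mul_pos h₁ (sub_pos.2 h.s_lt_one)) h.beta_pos)
    (mul_pos (mul_pos h.alpha_pos h.s_pos) h₂)

lemma two_div_lt_lastBound (h : IsAdmissiblePair α β y δ s) (hy : 0 < y) :
    2 / (1 + 2 * y) < lastBound α β y δ s := by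
  have h₁ : 0 < α * (1 - s) * (β - s) :=
    mul_pos (mul_pos h.alpha_pos (sub_pos.2 h.s_lt_one)) (sub_pos.2 h.lt_beta)
  have h₂ : 0 < α * s * (2 * y - (s - δ)) :=
    mul_pos (mul_pos h.alpha_pos h.s_pos) (sub_pos.2 h.sub_gap_lt)
  rw [lastBound, div_lt_div_iff₀ (by positivity) (h.lastBound_den_pos hy)]
  linarith

lemma two_mul_div_lt_lastBound (h : IsAdmissiblePair α β y δ s) (hy : 0 < y) :
    2 * s / (2 * s - δ) < lastBound α β y δ s := by
  rw [lastBound, div_lt_div_iff₀ (by linarith [h.gap_lt_s, h.s_pos]) (h.lastBound_den_pos hy)]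
  linarith [mul_lt_mul_of_pos_left h.gap_mul_lt (sub_pos.2 h.s_lt_one)]

lemma two_div_lt_min (h : IsAdmissiblePair α β y δ s) (hy : 0 < y) :
    2 / (1 + 2 * y) < min 2 (min (2 / ((2 - α) * y + 1)) (2 / (1 - δ + s))) := by
  have hαy : 0 < (2 - α) * y := mul_pos (by linarith [h.alpha_lt_one]) hy
  refine lt_min (div_lt_self two_pos (by linarith)) (lt_min ?_ ?_)
  · exact div_lt_div_of_pos_left two_pos (by linarith) (by linarith [mul_pos h.alpha_pos hy])
  · exact div_lt_div_of_pos_left two_pos (by linarith [h.gap_lt_s]) (by linarith [h.sub_gap_lt])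

lemma two_mul_div_lt_min (h : IsAdmissiblePair α β y δ s) (hy : 0 < y) :
    2 * s / (2 * s - δ) < min 2 (min (2 / ((2 - α) * y + 1)) (2 / (1 - δ + s))) := by
  have hαy : 0 < (2 - α) * y := mul_pos (by linarith [h.alpha_lt_one]) hy
  have hden : 0 < 2 * s - δ := by linarith [h.gap_lt_s, h.s_pos]
  refine lt_min ?_ (lt_min ?_ ?_)
  · rw [div_lt_iff₀ hden]
    linarith [h.gap_lt_s]
  · rw [div_lt_div_iff₀ hden (by linarith)]
    linarith [h.gap_lt_mul]
  · rw [div_lt_div_iff₀ hden (by linarith [h.gap_lt_s])]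
    linarith [mul_pos (sub_pos.2 h.s_lt_one) (sub_pos.2 h.gap_lt_s)]

lemma exists_exponent (h : IsAdmissiblePair α β y δ s) (hy : 0 < y) :
    ∃ p, 1 < p ∧ p < 2 ∧ 2 / (1 + 2 * y) < p ∧ 2 * s / (2 * s - δ) < p ∧
      p < 2 / ((2 - α) * y + 1) ∧ p < 2 / (1 - δ + s) ∧ p < lastBound α β y δ s := by
  obtain ⟨p, hlow, hup⟩ := exists_between
    (max_lt (lt_min (h.two_div_lt_min hy) (h.two_div_lt_lastBound hy))
      (lt_min (h.two_mul_div_lt_min hy) (h.two_mul_div_lt_lastBound hy)))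
  simp only [max_lt_iff, lt_min_iff] at hlow hup
  obtain ⟨⟨hp₂, hp_fst, hp_snd⟩, hp_last⟩ := hup
  exact ⟨p, h.one_lt_two_mul_div.trans hlow.2, hp₂, hlow.1, hlow.2, hp_fst, hp_snd, hp_last⟩

end IsAdmissiblePair

lemma exists_isAdmissiblePair_one_sub_two_div {α β m : ℝ} (hα : α < 1) (hβ : 0 < β)
    (hβα : β < α / 2) (hm : 2 < m) (hmα : (2 - α) * m < 8)
    (h₁ : (2 * (2 - α) * β - 3 * α + 2) * m < 4 * (2 - α) * β)
    (h₂ : (4 + 8 * β - 4 * α - 3 * α ^ 2) * m < 16 * β) :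
    ∃ δ s, IsAdmissiblePair α β (1 - 2 / m) δ s := by
  have hm₀ : 0 < m := two_pos.trans hm
  have hym : (1 - 2 / m) * m = m - 2 := by field_simp
  have hy₀ : 0 < 1 - 2 / m := sub_pos.2 ((div_lt_one hm₀).2 hm)
  refine exists_isAdmissiblePair hα hβ hβα hy₀ ?_ ?_ ?_ <;>
    refine lt_of_mul_lt_mul_right ?_ hm₀.le <;> rw [mul_assoc, hym] <;> linarith

theorem exists_admissible_eta_s_p_general {α β m : ℝ}
    (hα : α < 1) (hβ : 0 < β) (hβα : β < α / 2) (hm : 2 < m) (hmα : (2 - α) * m < 8)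
    (h₁ : (2 * (2 - α) * β - 3 * α + 2) * m < 4 * (2 - α) * β)
    (h₂ : (4 + 8 * β - 4 * α - 3 * α ^ 2) * m < 16 * β) :
    ∃ η s p : ℝ,
      β < η ∧ η < min (1 + β - α) (α / 2) ∧
      1 + β - α - η < s ∧ s < β ∧
      1 < p ∧ p < 2 ∧
      2 * m / (3 * m - 4) < p ∧
      2 * s / (2 * s + α + η - β - 1) < p ∧
      p < 2 * m / ((2 - α) * (m - 2) + m) ∧
      p < 2 / (α + η - β + s) ∧
      p < (4 * (1 - s) * β + 2 * α * s) /
          ((6 - α - 8 / m) * (1 - s) * β + α * s * (1 + α + η - β)) := by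
  have hm₀ : m ≠ 0 := by linarith
  obtain ⟨δ, s, h⟩ := exists_isAdmissiblePair_one_sub_two_div hα hβ hβα hm hmα h₁ h₂
  obtain ⟨p, hp₁, hp₂, hlow₁, hlow₂, hup₁, hup₂, hup₃⟩ :=
    h.exists_exponent (sub_pos.2 ((div_lt_one (by linarith)).2 hm))
  refine ⟨1 + β - α - δ, s, p, by linarith [h.gap_lt],
    lt_min (by linarith [h.gap_pos]) (by linarith [h.lt_gap]), by linarith [h.gap_lt_s],
    h.lt_beta, hp₁, hp₂, ?_, ?_, ?_, ?_, ?_⟩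
  · rwa [show 3 * m - 4 = (1 + 2 * (1 - 2 / m)) * m by field_simp; ring,
      mul_div_mul_right _ _ hm₀]
  · convert hlow₂ using 2; ring
  · rwa [show (2 - α) * (m - 2) + m = ((2 - α) * (1 - 2 / m) + 1) * m by field_simp,
      mul_div_mul_right _ _ hm₀]
  · convert hup₂ using 2; ring
  · convert hup₃ using 1; rw [lastBound]; ring

/-- existence of admissible parameters `η`, `s`, `p`. -/
theorem exists_admissible_eta_s_p (α β m : ℝ)
    (hα0 : 2 / 3 < α) (hα1 : α < 1) (hβ0 : 1 - α < β) (hβ1 : β < α / 2)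
    (hm : CondM α β m) :
    ∃ η s p : ℝ,
      β < η ∧ η < min (1 + β - α) (α / 2) ∧
      1 + β - α - η < s ∧ s < β ∧
      1 < p ∧ p < 2 ∧
      2 * m / (3 * m - 4) < p ∧
      2 * s / (2 * s + α + η - β - 1) < p ∧
      p < 2 * m / ((2 - α) * (m - 2) + m) ∧
      p < 2 / (α + η - β + s) ∧
      p < (4 * (1 - s) * β + 2 * α * s) /
          ((6 - α - 8 / m) * (1 - s) * β + α * s * (1 + α + η - β)) := by
  obtain ⟨hm_gt, hm_lt, h₁, h₂⟩ := hm
  have hm₂ : 2 < m := lt_trans (by rw [lt_div_iff₀] <;> linarith) hm_gt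
  have hm₄ : m < 4 := hm_lt.trans_le (min_le_left _ _)
  have hmα : (2 - α) * m < 8 := by nlinarith
  exact exists_admissible_eta_s_p_general hα1 (by linarith) hβ1 hm₂ hmα h₁ h₂
end
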